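/- The Demazure descent algebra 𝔇 is free as a left A-module, with basis the set of all finite words G_{i_1}G_{i_2}⋯G_{i_r} in the generators G_1, …, G_n having no two consecutive equal letters (i_t ≠ i_{t+1} for all t), including the empty word; the same set is also a basis of 𝔇 as a right A-module. -/

import Mathlib

open scoped TensorProduct

noncomputable section

abbrev Vd (d : ℕ) := Fin d → ℂ
abbrev Ad (d : ℕ) := MvPolynomial (Fin d) ℂ

/-- Action of `g ∈ GL(V)` on polynomials: substitute `X j ↦ (g⁻¹ x)_j`. -/
def glAct {d : ℕ} (g : GL (Fin d) ℂ) : Ad d →ₐ[ℂ] Ad d :=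
  MvPolynomial.aeval fun j =>
    ∑ k, ((g⁻¹ : GL (Fin d) ℂ) : Matrix (Fin d) (Fin d) ℂ) j k • MvPolynomial.X k

/-- Embedding of linear forms on `V` as degree-one polynomials. -/
def lin {d : ℕ} (θ : Vd d →ₗ[ℂ] ℂ) : Ad d :=
  ∑ j, θ (Pi.single j 1) • MvPolynomial.X j

structure CoxeterSetup (d n : ℕ) where
  Γ : Subgroup (GL (Fin d) ℂ)
  finite : Finite Γ
  s : Fin n → Γ
  gen : Subgroup.closure (Set.range s) = (⊤ : Subgroup Γ)
  α : Fin n → (Vd d →ₗ[ℂ] ℂ)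
  coroot : Fin n → Vd d
  pairing : ∀ i, α i (coroot i) = 2
  refl : ∀ i (v : Vd d),
    ((s i : GL (Fin d) ℂ) : Matrix (Fin d) (Fin d) ℂ).mulVec v = v - α i v • coroot i


/-- The subalgebra of `Γ'`-invariant polynomials. -/
def FixedSub {d n : ℕ} (S : CoxeterSetup d n) (Γ' : Subgroup S.Γ) : Subalgebra ℂ (Ad d) where
  carrier := {f | ∀ g ∈ Γ', glAct (g : GL (Fin d) ℂ) f = f}
  mul_mem' := fun hf hg g hgmem => by simp [map_mul, hf g hgmem, hg g hgmem]
  add_mem' := fun hf hg g hgmem => by simp [map_add, hf g hgmem, hg g hgmem]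
  algebraMap_mem' := fun c g _ => by simp

/-- `M` (with `Γ'`-action `ρ`) descends to `A^{Γ'}`. -/
def Descends {d n : ℕ} (S : CoxeterSetup d n) (Γ' : Subgroup S.Γ) (M : Type)
    [AddCommGroup M] [Module ℂ M] [Module (Ad d) M] [IsScalarTower ℂ (Ad d) M]
    (ρ : Γ' →* Module.End ℂ M) : Prop :=
  ∃ (N : Type) (_ : AddCommGroup N) (_ : Module (FixedSub S Γ') N)
    (e : ((Ad d) ⊗[FixedSub S Γ'] N) ≃ₗ[Ad d] M),
    ∀ (g : Γ') (a : Ad d) (x : N),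
      ρ g (e (a ⊗ₜ x)) = e ((glAct ((g : S.Γ) : GL (Fin d) ℂ) a) ⊗ₜ x)


/-- Alternating product `x·y·x·⋯` with `m` factors, starting with `x`. -/
def altProd {M : Type*} [Monoid M] (x y : M) : ℕ → M
  | 0 => 1
  | (j + 1) => x * altProd y x j

/-- The order `m_{ij}` of `sᵢ sⱼ` in `Γ`. -/
def mOrd {d n : ℕ} (S : CoxeterSetup d n) (i j : Fin n) : ℕ :=
  orderOf (S.s i * S.s j)

/-- Relations presenting the Demazure descent algebra `𝔇`: the inclusion of `A` is a
`ℂ`-algebra map, `Gᵢ² = 0`, and `Gᵢ·θ = θ(αᵢ^∨) + sᵢ(θ)·Gᵢ` for linear forms `θ`. -/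
inductive DRel {d n : ℕ} (S : CoxeterSetup d n) :
    FreeAlgebra ℂ (Ad d ⊕ Fin n) → FreeAlgebra ℂ (Ad d ⊕ Fin n) → Prop
  | add (a b : Ad d) :
      DRel S (FreeAlgebra.ι ℂ (Sum.inl a) + FreeAlgebra.ι ℂ (Sum.inl b))
        (FreeAlgebra.ι ℂ (Sum.inl (a + b)))
  | mul (a b : Ad d) :
      DRel S (FreeAlgebra.ι ℂ (Sum.inl a) * FreeAlgebra.ι ℂ (Sum.inl b))
        (FreeAlgebra.ι ℂ (Sum.inl (a * b)))
  | scalar (c : ℂ) :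
      DRel S (algebraMap ℂ _ c) (FreeAlgebra.ι ℂ (Sum.inl (algebraMap ℂ (Ad d) c)))
  | sq (i : Fin n) :
      DRel S (FreeAlgebra.ι ℂ (Sum.inr i) * FreeAlgebra.ι ℂ (Sum.inr i)) 0
  | straighten (i : Fin n) (θ : Vd d →ₗ[ℂ] ℂ) :
      DRel S (FreeAlgebra.ι ℂ (Sum.inr i) * FreeAlgebra.ι ℂ (Sum.inl (lin θ)))
        (algebraMap ℂ _ (θ (S.coroot i)) +
          FreeAlgebra.ι ℂ (Sum.inl (glAct ((S.s i : S.Γ) : GL (Fin d) ℂ) (lin θ))) *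
            FreeAlgebra.ι ℂ (Sum.inr i))

/-- The Demazure descent algebra `𝔇`. -/
abbrev DD {d n : ℕ} (S : CoxeterSetup d n) := RingQuot (DRel S)

/-- The generator `Gᵢ ∈ 𝔇`. -/
def GG {d n : ℕ} (S : CoxeterSetup d n) (i : Fin n) : DD S :=
  RingQuot.mkRingHom (DRel S) (FreeAlgebra.ι ℂ (Sum.inr i))

/-- The canonical ring homomorphism `A → 𝔇`. -/
def ofA {d n : ℕ} (S : CoxeterSetup d n) : Ad d →+* DD S where
  toFun a := RingQuot.mkRingHom (DRel S) (FreeAlgebra.ι ℂ (Sum.inl a))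
  map_one' := by
    have h := RingQuot.mkRingHom_rel (DRel.scalar (S := S) 1)
    simpa using h.symm
  map_mul' a b := by
    exact ((RingQuot.mkRingHom_rel (DRel.mul (S := S) a b)).symm).trans (map_mul _ _ _)
  map_zero' := by
    have h := RingQuot.mkRingHom_rel (DRel.scalar (S := S) 0)
    simpa using h.symm
  map_add' a b := by
    exact ((RingQuot.mkRingHom_rel (DRel.add (S := S) a b)).symm).trans (map_add _ _ _)

/-- The element `σᵢ := 1 − αᵢ·Gᵢ ∈ 𝔇`. -/
def sigmaD {d n : ℕ} (S : CoxeterSetup d n) (i : Fin n) : DD S :=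
  1 - ofA S (lin (S.α i)) * GG S i

/-- The set of Coxeter braid relators `B_{ij}`. -/
def coxeterBraidSet {d n : ℕ} (S : CoxeterSetup d n) : Set (DD S) :=
  {x | ∃ i j : Fin n, i ≠ j ∧
    x = altProd (sigmaD S i) (sigmaD S j) (mOrd S i j) -
        altProd (sigmaD S j) (sigmaD S i) (mOrd S i j)}

/-- The set of Demazure braid relators `B^D_{ij}`. -/
def demazureBraidSet {d n : ℕ} (S : CoxeterSetup d n) : Set (DD S) :=
  {x | ∃ i j : Fin n, i ≠ j ∧
    x = altProd (GG S i) (GG S j) (mOrd S i j) -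
        altProd (GG S j) (GG S i) (mOrd S i j)}

/-- The product in `𝔇` of the generators `G` along a word. -/
def wordProd {d n : ℕ} (S : CoxeterSetup d n) (w : List (Fin n)) : DD S :=
  (w.map (GG S)).prod

/-- The sequence of roots `α_k, s_k(α_l), s_k s_l(α_k), …` as degree-one polynomials. -/
def rootSeqP {d n : ℕ} (S : CoxeterSetup d n) (k l : Fin n) (j : ℕ) : Ad d :=
  glAct ((altProd (S.s k) (S.s l) j : S.Γ) : GL (Fin d) ℂ)
    (lin (S.α (if Even j then k else l)))

/-- `Δ_{k,l}`, the product of the `m_{kl}` roots `α_k, s_k(α_l), s_k s_l(α_k), …`. -/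
def DeltaP {d n : ℕ} (S : CoxeterSetup d n) (k l : Fin n) : Ad d :=
  ∏ j ∈ Finset.range (mOrd S k l), rootSeqP S k l j


section Aux
variable {d n : ℕ} (S : CoxeterSetup d n)

/-- the action of the simple reflection on polynomials -/
def sAct (i : Fin n) : Ad d →ₐ[ℂ] Ad d := glAct ((S.s i : S.Γ) : GL (Fin d) ℂ)

lemma s_inv (i : Fin n) : (((S.s i : S.Γ) : GL (Fin d) ℂ))⁻¹ = ((S.s i : S.Γ) : GL (Fin d) ℂ) := by
  rw [inv_eq_iff_mul_eq_one]
  ext1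
  apply Matrix.toLin'.injective
  ext1 v
  ext1
  simp [← Matrix.mulVec_mulVec, S.refl, S.pairing, -Matrix.mulVec_single]
  try module

lemma eval_lin (θ : Vd d →ₗ[ℂ] ℂ) (v : Vd d) : MvPolynomial.eval v (lin θ) = θ v := by
  conv_rhs => rw [← Finset.univ_sum_single v, map_sum]
  simp only [lin, map_sum, MvPolynomial.smul_eval, MvPolynomial.eval_X]
  refine Finset.sum_congr rfl fun j _ => ?_
  have : (Pi.single j (v j) : Vd d) = v j • Pi.single j 1 := by
    rw [← Pi.single_smul]; simp
  rw [this, map_smul, smul_eq_mul, mul_comm]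

lemma lin_sub_smul (θ η : Vd d →ₗ[ℂ] ℂ) (c : ℂ) :
    lin (θ - c • η) = lin θ - MvPolynomial.C c * lin η := by
  simp [lin, Finset.mul_sum, ← Finset.sum_sub_distrib, sub_smul, mul_smul,
    MvPolynomial.smul_eq_C_mul]

lemma lin_proj (j : Fin d) : lin (LinearMap.proj j : Vd d →ₗ[ℂ] ℂ) = MvPolynomial.X j := by
  simp [lin, Pi.single_apply]

lemma sAct_lin (i : Fin n) (θ : Vd d →ₗ[ℂ] ℂ) :
    sAct S i (lin θ) = lin θ - MvPolynomial.C (θ (S.coroot i)) * lin (S.α i) := by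
  rw [← lin_sub_smul]
  simp only [sAct, glAct, s_inv]
  simp only [lin, map_sum, map_smul, MvPolynomial.aeval_X, Finset.smul_sum, smul_smul]
  rw [Finset.sum_comm]
  refine Finset.sum_congr rfl fun k _ => ?_
  rw [← Finset.sum_smul]
  congr 1
  have h := congrArg θ (S.refl i (Pi.single k 1))
  rw [Matrix.mulVec_single_one] at h
  rw [← eval_lin] at h
  simp only [lin, map_sum, MvPolynomial.smul_eval, MvPolynomial.eval_X] at h
  simp only [Matrix.col_apply] at h
  rw [h]
  simp [mul_comm]

lemma lin_root_ne (i : Fin n) : lin (S.α i) ≠ 0 := by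
  intro h
  have := eval_lin (S.α i) (S.coroot i)
  rw [h, S.pairing] at this
  simp at this

lemma sAct_root (i : Fin n) : sAct S i (lin (S.α i)) = - lin (S.α i) := by
  rw [sAct_lin, S.pairing]
  have : (MvPolynomial.C 2 : Ad d) = 2 := map_ofNat MvPolynomial.C 2
  rw [this]; ring

lemma sAct_sAct (i : Fin n) (f : Ad d) : sAct S i (sAct S i f) = f := by
  have : (sAct S i).comp (sAct S i) = AlgHom.id ℂ _ := by
    ext1 j
    rw [AlgHom.comp_apply, ← lin_proj, sAct_lin, map_sub, map_mul, sAct_root, sAct_lin,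
      MvPolynomial.algHom_C]
    simp
  exact DFunLike.congr_fun this f

lemma root_dvd (i : Fin n) (f : Ad d) : lin (S.α i) ∣ f - sAct S i f := by
  induction f using MvPolynomial.induction_on with
  | C a => simp [MvPolynomial.algHom_C]
  | add p q hp hq =>
    rw [map_add, add_sub_add_comm]; exact dvd_add hp hq
  | mul_X p j hp =>
    have : p * MvPolynomial.X j - sAct S i (p * MvPolynomial.X j)
      = (p - sAct S i p) * MvPolynomial.X j +
        sAct S i p * (MvPolynomial.X j - sAct S i (MvPolynomial.X j)) := by
      rw [map_mul]; ring
    rw [this]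
    refine dvd_add (hp.mul_right _) (Dvd.dvd.mul_left ?_ _)
    rw [← lin_proj, sAct_lin, sub_sub_cancel]
    exact dvd_mul_left _ _

/-- Demazure operator -/
def dem (i : Fin n) : Ad d →ₗ[ℂ] Ad d where
  toFun f := (root_dvd S i f).choose
  map_add' f g := by
    apply mul_left_cancel₀ (lin_root_ne S i)
    rw [← (root_dvd S i (f + g)).choose_spec, mul_add, ← (root_dvd S i f).choose_spec,
      ← (root_dvd S i g).choose_spec, map_add]; ring
  map_smul' c f := by
    apply mul_left_cancel₀ (lin_root_ne S i)
    rw [← (root_dvd S i (c • f)).choose_spec, RingHom.id_apply, mul_smul_comm,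
      ← (root_dvd S i f).choose_spec, map_smul, smul_sub]

lemma dem_spec (i : Fin n) (f : Ad d) : lin (S.α i) * dem S i f = f - sAct S i f :=
  (root_dvd S i f).choose_spec.symm

lemma dem_mul (i : Fin n) (f g : Ad d) :
    dem S i (f * g) = dem S i f * g + sAct S i f * dem S i g := by
  apply mul_left_cancel₀ (lin_root_ne S i)
  rw [dem_spec, mul_add, ← mul_assoc, dem_spec, mul_left_comm, dem_spec, map_mul]; ring

lemma dem_lin (i : Fin n) (θ : Vd d →ₗ[ℂ] ℂ) :
    dem S i (lin θ) = MvPolynomial.C (θ (S.coroot i)) := by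
  apply mul_left_cancel₀ (lin_root_ne S i)
  rw [dem_spec, sAct_lin]; ring

lemma dem_C (i : Fin n) (c : ℂ) : dem S i (MvPolynomial.C c) = 0 := by
  apply mul_left_cancel₀ (lin_root_ne S i)
  rw [dem_spec, MvPolynomial.algHom_C]; simp

lemma dem_one (i : Fin n) : dem S i 1 = 0 := by
  simpa using dem_C S i 1

lemma sAct_dem (i : Fin n) (f : Ad d) : sAct S i (dem S i f) = dem S i f := by
  apply mul_left_cancel₀ (lin_root_ne S i)
  have h := congrArg (sAct S i) (dem_spec S i f)
  rw [map_mul, sAct_root, map_sub, sAct_sAct] at h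
  rw [dem_spec]
  linear_combination -h

lemma dem_sAct (i : Fin n) (f : Ad d) : dem S i (sAct S i f) = - dem S i f := by
  apply mul_left_cancel₀ (lin_root_ne S i)
  rw [dem_spec, mul_neg, dem_spec, sAct_sAct]; ring

lemma dem_dem (i : Fin n) (f : Ad d) : dem S i (dem S i f) = 0 := by
  apply mul_left_cancel₀ (lin_root_ne S i)
  rw [dem_spec, sAct_dem]; simp

abbrev RW (n : ℕ) := {w : List (Fin n) // w.Chain' (· ≠ ·)}
abbrev MM (d n : ℕ) := RW n →₀ Ad d

open Classical in
/-- `e_w ↦ e_{iw}`, zero if not reduced -/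
def consTerm (i : Fin n) (w : RW n) : Ad d →ₗ[ℂ] MM d n :=
  if h : (i :: w.1).Chain' (· ≠ ·) then Finsupp.lsingle ⟨i :: w.1, h⟩ else 0

/-- The operator of `G_i` on the model module. -/
def gOp (i : Fin n) : Module.End ℂ (MM d n) :=
  Finsupp.lsum ℂ fun w =>
    (Finsupp.lsingle w) ∘ₗ dem S i + consTerm i w ∘ₗ (sAct S i).toLinearMap

lemma gOp_single (i : Fin n) (w : RW n) (a : Ad d) :
    gOp S i (Finsupp.single w a) = Finsupp.single w (dem S i a) + consTerm i w (sAct S i a) := by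
  simp [gOp]

lemma consTerm_smul (i : Fin n) (w : RW n) (a b : Ad d) :
    consTerm i w (a * b) = a • consTerm i w b := by
  unfold consTerm
  split_ifs <;> simp

lemma gOp_consTerm (i : Fin n) (w : RW n) (a : Ad d) :
    gOp S i (consTerm i w a) = consTerm i w (dem S i a) := by
  unfold consTerm
  split_ifs with h
  · rw [Finsupp.lsingle_apply, gOp_single]
    have : consTerm (d := d) i ⟨i :: w.1, h⟩ = 0 := by
      unfold consTerm
      rw [dif_neg]
      intro h'
      exact (List.isChain_cons_cons.1 h').1 rfl
    rw [this]; simp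
  · simp

lemma gOp_sq (i : Fin n) : gOp S i * gOp S i = 0 := by
  refine Finsupp.lhom_ext fun w a => ?_
  rw [Module.End.mul_apply, gOp_single, map_add, gOp_single, gOp_consTerm, dem_dem, sAct_dem,
    dem_sAct]
  simp

lemma gOp_smul (i : Fin n) (f : Ad d) (x : MM d n) :
    gOp S i (f • x) = dem S i f • x + sAct S i f • gOp S i x := by
  induction x using Finsupp.induction_linear with
  | zero => simp
  | add x y hx hy => simp only [smul_add, map_add, hx, hy]; abel
  | single w a =>
    rw [Finsupp.smul_single, smul_eq_mul, gOp_single, gOp_single, dem_mul, map_mul,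
      consTerm_smul, Finsupp.smul_single, smul_add, Finsupp.smul_single, Finsupp.single_add]
    simp only [smul_eq_mul]; abel

/-- generators acting on the model -/
def genOp : Ad d ⊕ Fin n → Module.End ℂ (MM d n) :=
  Sum.elim (fun a => Algebra.lsmul ℂ ℂ (MM d n) a) (gOp S)

lemma genOp_rel ⦃x y : FreeAlgebra ℂ (Ad d ⊕ Fin n)⦄ (h : DRel S x y) :
    (FreeAlgebra.lift ℂ (genOp S)).toRingHom x = (FreeAlgebra.lift ℂ (genOp S)).toRingHom y := by
  change FreeAlgebra.lift ℂ (genOp S) x = FreeAlgebra.lift ℂ (genOp S) y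
  cases h with
  | add a b => simp [genOp]
  | mul a b => simp [genOp]
  | scalar c =>
    rw [AlgHom.commutes, FreeAlgebra.lift_ι_apply]
    simp only [genOp, Sum.elim_inl, AlgHom.commutes]
  | sq i => simp [genOp, gOp_sq]
  | straighten i θ =>
    rw [map_add, map_mul, map_mul, AlgHom.commutes]
    simp only [FreeAlgebra.lift_ι_apply, genOp, Sum.elim_inl, Sum.elim_inr]
    refine LinearMap.ext fun x => ?_
    simp only [Module.End.mul_apply, LinearMap.add_apply, Algebra.lsmul_coe]
    rw [gOp_smul, dem_lin, Module.algebraMap_end_apply]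
    congr 1
    rw [← MvPolynomial.algebraMap_eq, algebraMap_smul]

/-- the representation -/
def rep : DD S →+* Module.End ℂ (MM d n) :=
  RingQuot.lift ⟨(FreeAlgebra.lift ℂ (genOp S)).toRingHom, genOp_rel S⟩

lemma rep_ofA (a : Ad d) (x : MM d n) : rep S (ofA S a) x = a • x := by
  have : rep S (ofA S a) = (FreeAlgebra.lift ℂ (genOp S)) (FreeAlgebra.ι ℂ (Sum.inl a)) :=
    RingQuot.lift_mkRingHom_apply _ (genOp_rel S) _
  rw [this]; simp [genOp]

lemma rep_GG (i : Fin n) : rep S (GG S i) = gOp S i := by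
  have : rep S (GG S i) = (FreeAlgebra.lift ℂ (genOp S)) (FreeAlgebra.ι ℂ (Sum.inr i)) :=
    RingQuot.lift_mkRingHom_apply _ (genOp_rel S) _
  rw [this]; simp [genOp]

def nilW (n : ℕ) : RW n := ⟨[], List.IsChain.nil⟩

lemma rep_word (w : List (Fin n)) (hw : w.Chain' (· ≠ ·)) :
    rep S (wordProd S w) (Finsupp.single (nilW n) 1) = Finsupp.single ⟨w, hw⟩ 1 := by
  induction w with
  | nil => simp [wordProd, nilW]
  | cons i w ih =>
    have hw' : w.Chain' (· ≠ ·) := List.IsChain.tail hw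
    have : wordProd S (i :: w) = GG S i * wordProd S w := by simp [wordProd]
    rw [this, map_mul, Module.End.mul_apply, ih hw', rep_GG, gOp_single, dem_one, map_one]
    unfold consTerm
    rw [dif_pos hw]; simp

/-- left linear combinations -/
def comb : MM d n →+ DD S :=
  Finsupp.liftAddHom fun w => (AddMonoidHom.mulRight (wordProd S w.1)).comp (ofA S).toAddMonoidHom

lemma comb_apply (c : MM d n) : comb S c = c.sum fun w a => ofA S a * wordProd S w.1 := rfl

lemma comb_single (w : RW n) (a : Ad d) :
    comb S (Finsupp.single w a) = ofA S a * wordProd S w.1 := by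
  rw [comb_apply, Finsupp.sum_single_index]; simp

lemma rep_comb (c : MM d n) : rep S (comb S c) (Finsupp.single (nilW n) 1) = c := by
  induction c using Finsupp.induction_linear with
  | zero => simp
  | add x y hx hy => rw [map_add, map_add, LinearMap.add_apply, hx, hy]
  | single w a =>
    rw [comb_single, map_mul, Module.End.mul_apply, rep_word S w.1 w.2, rep_ofA]; simp

lemma algebraMap_DD (c : ℂ) : algebraMap ℂ (DD S) c = ofA S (MvPolynomial.C c) := by
  have h := RingQuot.mkRingHom_rel (DRel.scalar (S := S) c)
  have h2 := (RingQuot.mkAlgHom ℂ (DRel S)).commutes c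
  rw [← h2]
  refine Eq.trans ?_ h
  rw [← RingQuot.mkAlgHom_coe ℂ (DRel S)]; rfl

lemma GG_sq (i : Fin n) : GG S i * GG S i = 0 := by
  have h := RingQuot.mkRingHom_rel (DRel.sq (S := S) i)
  simpa [GG] using h

lemma mk_algebraMap (c : ℂ) : RingQuot.mkRingHom (DRel S) (algebraMap ℂ _ c) =
    ofA S (MvPolynomial.C c) := RingQuot.mkRingHom_rel (DRel.scalar (S := S) c)

lemma GG_lin (i : Fin n) (θ : Vd d →ₗ[ℂ] ℂ) : GG S i * ofA S (lin θ) =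
    ofA S (dem S i (lin θ)) + ofA S (sAct S i (lin θ)) * GG S i := by
  have h := RingQuot.mkRingHom_rel (DRel.straighten (S := S) i θ)
  rw [map_add, map_mul, map_mul, mk_algebraMap] at h
  rw [dem_lin]
  exact h

lemma GG_C (i : Fin n) (c : ℂ) :
    GG S i * ofA S (MvPolynomial.C c) = ofA S (MvPolynomial.C c) * GG S i := by
  rw [← algebraMap_DD]; exact (Algebra.commutes _ _).symm

lemma GG_ofA (i : Fin n) (f : Ad d) : GG S i * ofA S f =
    ofA S (dem S i f) + ofA S (sAct S i f) * GG S i := by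
  induction f using MvPolynomial.induction_on with
  | C a => rw [GG_C, dem_C, MvPolynomial.algHom_C]; simp
  | add p q hp hq => simp only [map_add, mul_add, hp, hq, add_mul]; abel
  | mul_X p j hp =>
    rw [dem_mul, map_mul, ← mul_assoc, hp, add_mul, mul_assoc _ (GG S i), ← lin_proj, GG_lin]
    simp only [map_add, map_mul, mul_add, mul_assoc, add_assoc]

lemma range_GG (i : Fin n) (c : MM d n) : ∃ c', comb S c' = GG S i * comb S c := by
  induction c using Finsupp.induction_linear with
  | zero => exact ⟨0, by simp⟩
  | add x y hx hy =>
    obtain ⟨a, ha⟩ := hx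
    obtain ⟨b, hb⟩ := hy
    exact ⟨a + b, by rw [map_add, map_add, ha, hb, mul_add]⟩
  | single w a =>
    have key : GG S i * comb S (Finsupp.single w a) =
        comb S (Finsupp.single w (dem S i a)) + ofA S (sAct S i a) * (GG S i * wordProd S w.1) := by
      rw [comb_single, comb_single, ← mul_assoc, GG_ofA, add_mul, mul_assoc _ (GG S i)]
    by_cases h : (i :: w.1).Chain' (· ≠ ·)
    · refine ⟨Finsupp.single w (dem S i a) + Finsupp.single ⟨i :: w.1, h⟩ (sAct S i a), ?_⟩
      rw [key, map_add, comb_single S ⟨i :: w.1, h⟩]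
      simp [wordProd]
    · refine ⟨Finsupp.single w (dem S i a), ?_⟩
      have : GG S i * wordProd S w.1 = 0 := by
        obtain ⟨w, hw⟩ := w
        cases w with
        | nil => exact absurd (List.IsChain.singleton _) h
        | cons j w =>
          have hij : i = j := by
            by_contra hij
            exact h (List.isChain_cons_cons.2 ⟨hij, hw⟩)
          subst hij
          simp [wordProd, ← mul_assoc, GG_sq]
      rw [key, this]; simp

lemma range_ofA (f : Ad d) (c : MM d n) : ∃ c', comb S c' = ofA S f * comb S c := by
  refine ⟨f • c, ?_⟩
  induction c using Finsupp.induction_linear with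
  | zero => simp
  | add x y hx hy => rw [smul_add, map_add, hx, hy, map_add, mul_add]
  | single w a => rw [Finsupp.smul_single, comb_single, comb_single, smul_eq_mul, map_mul, mul_assoc]

lemma range_all (y : FreeAlgebra ℂ (Ad d ⊕ Fin n)) : ∀ c : MM d n,
    ∃ c', comb S c' = RingQuot.mkRingHom (DRel S) y * comb S c := by
  induction y using FreeAlgebra.induction with
  | grade0 r => intro c; rw [mk_algebraMap]; exact range_ofA S _ c
  | grade1 x =>
    intro c
    cases x with
    | inl a => exact range_ofA S a c
    | inr i => exact range_GG S i c
  | mul a b ha hb =>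
    intro c
    obtain ⟨c1, h1⟩ := hb c
    obtain ⟨c2, h2⟩ := ha c1
    exact ⟨c2, by rw [h2, h1, map_mul, mul_assoc]⟩
  | add a b ha hb =>
    intro c
    obtain ⟨c1, h1⟩ := hb c
    obtain ⟨c2, h2⟩ := ha c
    exact ⟨c2 + c1, by rw [map_add, h2, h1, map_add, add_mul]⟩

lemma comb_bij : Function.Bijective (comb S) := by
  constructor
  · intro a b h
    rw [← rep_comb S a, h, rep_comb]
  · intro x
    obtain ⟨y, rfl⟩ := RingQuot.mkRingHom_surjective (DRel S) x
    obtain ⟨c, hc⟩ := range_all S y (Finsupp.single (nilW n) 1)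
    refine ⟨c, ?_⟩
    rw [hc, comb_single]; simp [wordProd, nilW]

lemma ofA_GG (i : Fin n) (f : Ad d) : ofA S f * GG S i =
    ofA S (dem S i f) + GG S i * ofA S (sAct S i f) := by
  rw [GG_ofA, dem_sAct, sAct_sAct]; simp

/-- generators in the opposite algebra -/
def genRev : Ad d ⊕ Fin n → (DD S)ᵐᵒᵖ :=
  Sum.elim (fun a => MulOpposite.op (ofA S a)) (fun i => MulOpposite.op (GG S i))

lemma genRev_rel ⦃x y : FreeAlgebra ℂ (Ad d ⊕ Fin n)⦄ (h : DRel S x y) :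
    (FreeAlgebra.lift ℂ (genRev S)).toRingHom x = (FreeAlgebra.lift ℂ (genRev S)).toRingHom y := by
  change FreeAlgebra.lift ℂ (genRev S) x = FreeAlgebra.lift ℂ (genRev S) y
  cases h with
  | add a b => simp [genRev]
  | mul a b => 
    rw [map_mul]
    simp only [FreeAlgebra.lift_ι_apply, genRev, Sum.elim_inl]
    rw [← MulOpposite.op_mul, ← map_mul, mul_comm]
  | scalar c =>
    rw [AlgHom.commutes, FreeAlgebra.lift_ι_apply, MulOpposite.algebraMap_apply, algebraMap_DD]
    rfl
  | sq i => simp [genRev, ← MulOpposite.op_mul, GG_sq]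
  | straighten i θ =>
    rw [map_add, map_mul, map_mul, AlgHom.commutes, MulOpposite.algebraMap_apply, algebraMap_DD]
    simp only [FreeAlgebra.lift_ι_apply, genRev, Sum.elim_inl, Sum.elim_inr]
    rw [← MulOpposite.op_mul, ← MulOpposite.op_mul, ← MulOpposite.op_add, ofA_GG, dem_lin]
    rfl

/-- the anti-involution -/
def rv : DD S →+* (DD S)ᵐᵒᵖ :=
  RingQuot.lift ⟨(FreeAlgebra.lift ℂ (genRev S)).toRingHom, genRev_rel S⟩

lemma rv_ofA (a : Ad d) : rv S (ofA S a) = MulOpposite.op (ofA S a) := by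
  have : rv S (ofA S a) = (FreeAlgebra.lift ℂ (genRev S)) (FreeAlgebra.ι ℂ (Sum.inl a)) :=
    RingQuot.lift_mkRingHom_apply _ (genRev_rel S) _
  rw [this]; simp [genRev]

lemma rv_GG (i : Fin n) : rv S (GG S i) = MulOpposite.op (GG S i) := by
  have : rv S (GG S i) = (FreeAlgebra.lift ℂ (genRev S)) (FreeAlgebra.ι ℂ (Sum.inr i)) :=
    RingQuot.lift_mkRingHom_apply _ (genRev_rel S) _
  rw [this]; simp [genRev]

lemma rv_word (w : List (Fin n)) :
    rv S (wordProd S w) = MulOpposite.op (wordProd S w.reverse) := by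
  induction w with
  | nil => simp [wordProd]
  | cons i w ih =>
    have h1 : wordProd S (i :: w) = GG S i * wordProd S w := by simp [wordProd]
    have h2 : wordProd S (i :: w).reverse = wordProd S w.reverse * GG S i := by simp [wordProd]
    rw [h1, h2, map_mul, ih, rv_GG, MulOpposite.op_mul]

def rv' : DD S →+ DD S := (MulOpposite.opAddEquiv.symm.toAddMonoidHom).comp (rv S).toAddMonoidHom

lemma rv'_left (w : List (Fin n)) (a : Ad d) :
    rv' S (ofA S a * wordProd S w) = wordProd S w.reverse * ofA S a := by
  change (rv S _).unop = _
  rw [map_mul, rv_ofA, rv_word]; rfl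

lemma rv'_right (w : List (Fin n)) (a : Ad d) :
    rv' S (wordProd S w * ofA S a) = ofA S a * wordProd S w.reverse := by
  change (rv S _).unop = _
  rw [map_mul, rv_ofA, rv_word]; rfl

lemma rv'_rv' (x : DD S) : rv' S (rv' S x) = x := by
  obtain ⟨c, rfl⟩ := (comb_bij S).2 x
  induction c using Finsupp.induction_linear with
  | zero => simp
  | add x y hx hy => simp only [map_add, hx, hy]
  | single w a => rw [comb_single, rv'_left, rv'_right, List.reverse_reverse]

def revW (n : ℕ) : RW n ≃ RW n where
  toFun w := ⟨w.1.reverse, List.isChain_reverse.2 (w.2.imp fun _ _ h => h.symm)⟩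
  invFun w := ⟨w.1.reverse, List.isChain_reverse.2 (w.2.imp fun _ _ h => h.symm)⟩
  left_inv w := by simp
  right_inv w := by simp

def combR : MM d n →+ DD S :=
  Finsupp.liftAddHom fun w => (AddMonoidHom.mulLeft (wordProd S w.1)).comp (ofA S).toAddMonoidHom

lemma combR_apply (c : MM d n) : combR S c = c.sum fun w a => wordProd S w.1 * ofA S a := rfl

lemma combR_eq (c : MM d n) : combR S c = rv' S (comb S (Finsupp.domCongr (revW n) c)) := by
  induction c using Finsupp.induction_linear with
  | zero => simp
  | add x y hx hy => simp only [map_add, hx, hy]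
  | single w a =>
    rw [Finsupp.domCongr_apply, Finsupp.equivMapDomain_single, comb_single, rv'_left, combR_apply,
      Finsupp.sum_single_index (by simp)]
    simp [revW]

lemma combR_bij : Function.Bijective (combR S) := by
  have h : ⇑(combR S) = rv' S ∘ comb S ∘ (Finsupp.domCongr (revW n) : MM d n ≃+ MM d n) :=
    funext (combR_eq S)
  rw [h]
  exact (Function.Involutive.bijective (rv'_rv' S)).comp ((comb_bij S).comp (AddEquiv.bijective _))

end Aux

/-- `𝔇` is free as a left `A`-module with basis the words in the `Gᵢ`
with no two consecutive equal letters (every element is uniquely a finite `A`-linear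
combination `∑ a_w · G_w`), and the same words form a basis of `𝔇` as a right `A`-module. -/
theorem demazureDescentAlgebra_free_over_A {d n : ℕ} (S : CoxeterSetup d n) :
    (∀ x : DD S, ∃! c : {w : List (Fin n) // w.Chain' (· ≠ ·)} →₀ Ad d,
        x = c.sum fun w a => ofA S a * wordProd S w.1) ∧
    (∀ x : DD S, ∃! c : {w : List (Fin n) // w.Chain' (· ≠ ·)} →₀ Ad d,
        x = c.sum fun w a => wordProd S w.1 * ofA S a) := by
  constructor
  · intro x
    obtain ⟨c, hc, hu⟩ := (comb_bij S).existsUnique x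
    exact ⟨c, hc.symm, fun y hy => hu y hy.symm⟩
  · intro x
    obtain ⟨c, hc, hu⟩ := (combR_bij S).existsUnique x
    exact ⟨c, hc.symm, fun y hy => hu y hy.symm⟩
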